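/- Let R be a commutative ring and S a commutative R-algebra that is finitely presented as an R-module. Then the canonical map ω_{S/R} : R[[t]] ⊗_R S → S[[t]] is bijective. -/

import Mathlib

/-! The bijectivity of `ω` concerns only the `R`-module structure of `S`. For every `R`-module `M`
there is a natural map `θ_M : R[[t]] ⊗ M → (ℕ → M)` sending `f ⊗ m` to `(fₙ • m)ₙ`, and for `M = S`
it is `ω` followed by reading off coefficients (`coeff_omegaPowerSeries`). For `M = R^ι` with `ι`
finite, `θ_M` is bijective because tensor products commute with finite products
(`powerSeriesTensorToSeq_bijective_pi`). Both `R[[t]] ⊗ -` and `M ↦ (ℕ → M)` are right exact, so a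
presentation `R^m → R^n → S → 0` and the five lemma give bijectivity of `θ_S`.
-/

open scoped TensorProduct

/-- The coefficientwise map `R[[t]] → S[[t]]` as an `R`-algebra homomorphism. -/
noncomputable def PowerSeries.mapAlgHom' (R S : Type u) [CommRing R] [CommRing S]
    [Algebra R S] : PowerSeries R →ₐ[R] PowerSeries S :=
  { PowerSeries.map (algebraMap R S) with
    commutes' := fun r => by
      simp [PowerSeries.algebraMap_apply, PowerSeries.map_C] }

/-- The canonical `R`-algebra homomorphism `ω_{S/R} : R[[t]] ⊗[R] S → S[[t]]`, determined by
sending an elementary tensor `f ⊗ s` to the product of the constant series `s` with the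
series obtained by mapping each coefficient of `f` into `S` along `R → S`. -/
noncomputable def omegaPowerSeries (R S : Type u) [CommRing R] [CommRing S] [Algebra R S] :
    PowerSeries R ⊗[R] S →ₐ[R] PowerSeries S :=
  Algebra.TensorProduct.productMap (PowerSeries.mapAlgHom' R S)
    (IsScalarTower.toAlgHom R S (PowerSeries S))

/-- The natural map `θ_M : R[[t]] ⊗[R] M → (ℕ → M)`, `f ⊗ m ↦ (fₙ • m)ₙ`. The target stands for
the module `M[[t]]` of power series with coefficients in `M`. -/
noncomputable def powerSeriesTensorToSeq (R M : Type*) [CommRing R] [AddCommGroup M] [Module R M] :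
    PowerSeries R ⊗[R] M →ₗ[R] (ℕ → M) :=
  LinearMap.pi fun n =>
    TensorProduct.lift ((LinearMap.lsmul R M).comp (PowerSeries.coeff (R := R) n))

@[simp]
theorem powerSeriesTensorToSeq_tmul {R M : Type*} [CommRing R] [AddCommGroup M] [Module R M]
    (f : PowerSeries R) (m : M) (n : ℕ) :
    powerSeriesTensorToSeq R M (f ⊗ₜ[R] m) n = PowerSeries.coeff n f • m := by
  simp [powerSeriesTensorToSeq]

/-- Naturality of `θ`. -/
theorem powerSeriesTensorToSeq_naturality {R M N : Type*} [CommRing R] [AddCommGroup M]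
    [Module R M] [AddCommGroup N] [Module R N] (g : M →ₗ[R] N) :
    g.compLeft ℕ ∘ₗ powerSeriesTensorToSeq R M =
      powerSeriesTensorToSeq R N ∘ₗ g.lTensor (PowerSeries R) := by
  refine TensorProduct.ext' fun f m => ?_
  funext n
  simp

/-- Under `R[[t]] ⊗ R^ι ≃ R[[t]]^ι`, the map `θ` becomes the identification of an `ι`-tuple of
series with a sequence of `ι`-tuples. -/
theorem powerSeriesTensorToSeq_bijective_pi (R ι : Type*) [CommRing R] [Finite ι] :
    Function.Bijective (powerSeriesTensorToSeq R (ι → R)) := by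
  classical
  have := Fintype.ofFinite ι
  let e := TensorProduct.piScalarRight R R (PowerSeries R) ι
  have key : ∀ x n i, powerSeriesTensorToSeq R (ι → R) x n i = PowerSeries.coeff n (e x i) := by
    intro x n i
    induction x using TensorProduct.induction_on with
    | zero => simp
    | add x y hx hy => simp [hx, hy]
    | tmul f v => simp [e, mul_comm]
  constructor
  · intro x y hxy
    apply e.injective
    funext i
    ext n
    rw [← key, ← key, hxy]
  · intro s
    refine ⟨e.symm fun i => PowerSeries.mk fun n => s n i, ?_⟩
    funext n i
    simp only [key, LinearEquiv.apply_symm_apply, PowerSeries.coeff_mk]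

theorem powerSeriesTensorToSeq_bijective (R M : Type*) [CommRing R] [AddCommGroup M] [Module R M]
    [Module.FinitePresentation R M] : Function.Bijective (powerSeriesTensorToSeq R M) := by
  obtain ⟨n, m, f, g, hf, hgf⟩ := Module.FinitePresentation.exists_fin' R M
  -- The functor `M ↦ (ℕ → M)` is exact because lifts can be chosen coordinatewise.
  have hexact : Function.Exact (g.compLeft ℕ) (f.compLeft ℕ) := by
    intro s
    constructor
    · intro hs
      choose u hu using fun k => (hgf (s k)).1 (congrFun hs k)
      exact ⟨u, funext hu⟩
    · rintro ⟨u, rfl⟩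
      exact funext fun k => hgf.apply_apply_eq_zero (u k)
  exact LinearMap.bijective_of_surjective_of_bijective_of_right_exact
    (g.lTensor (PowerSeries R)) (f.lTensor (PowerSeries R)) (g.compLeft ℕ) (f.compLeft ℕ)
    (powerSeriesTensorToSeq R (Fin m → R)) (powerSeriesTensorToSeq R (Fin n → R))
    (powerSeriesTensorToSeq R M)
    (powerSeriesTensorToSeq_naturality g) (powerSeriesTensorToSeq_naturality f)
    (lTensor_exact (PowerSeries R) hgf hf) hexact
    (powerSeriesTensorToSeq_bijective_pi R (Fin m)).2
    (powerSeriesTensorToSeq_bijective_pi R (Fin n))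
    (LinearMap.lTensor_surjective _ hf) hf.comp_left

/-- The coefficients of `ω x` are the entries of `θ_S x`. -/
theorem coeff_omegaPowerSeries {R S : Type u} [CommRing R] [CommRing S] [Algebra R S]
    (x : PowerSeries R ⊗[R] S) (n : ℕ) :
    PowerSeries.coeff n (omegaPowerSeries R S x) = powerSeriesTensorToSeq R S x n := by
  induction x using TensorProduct.induction_on with
  | zero => simp
  | add x y hx hy => simp [hx, hy]
  | tmul f s =>
    have hf : PowerSeries.mapAlgHom' R S f = PowerSeries.map (algebraMap R S) f := rfl
    simp [omegaPowerSeries, hf, Algebra.smul_def]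

/-- If `S` is finitely presented as an `R`-module, then the canonical map
`ω_{S/R} : R[[t]] ⊗[R] S → S[[t]]` is bijective. -/
theorem omegaPowerSeries_bijective (R S : Type u) [CommRing R] [CommRing S] [Algebra R S]
    [Module.FinitePresentation R S] :
    Function.Bijective (omegaPowerSeries R S) := by
  have hθ := powerSeriesTensorToSeq_bijective R S
  constructor
  · intro x y hxy
    apply hθ.1
    funext n
    rw [← coeff_omegaPowerSeries, ← coeff_omegaPowerSeries, hxy]
  · intro F
    obtain ⟨x, hx⟩ := hθ.2 fun n => PowerSeries.coeff n F
    refine ⟨x, ?_⟩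
    ext n
    rw [coeff_omegaPowerSeries, hx]
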